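/- arXiv:2511.04775 — 6 statements merged into one kernel-verified Lean document; each statement's English description precedes it below -/
import Mathlib

section
/- Let G = (V,E) be a finite simple graph on n vertices and let d be an integer with 1 ≤ d ≤ n. Then V can be partitioned into pairwise disjoint sets R, H_1, …, H_h (for some h ≥ 0) such that: (i) |H_i| > d for every i ∈ {1,…,h}; (ii) for every i and every pair of vertices u, v ∈ H_i there is a walk from u to v in G of length at most 4 (so each H_i has weak diameter at most 4 in G); and (iii) every vertex u ∈ R satisfies deg_G(u) < d. -/
/-!
Call a vertex high if its degree is at least `d`, and take a maximal family of high vertices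
(centers) with pairwise disjoint closed neighbourhoods. By maximality every high vertex is within
distance `2` of a center. Let each center claim its own closed neighbourhood, which has more than
`d` vertices, and assign every other vertex within distance `2` of the centers to one such center.
Each cluster lies within distance `2` of its center, and every unassigned vertex is not high.
-/

open Function

theorem exists_pairwise_disjoint_between {ι α : Type*} {A B : ι → Set α}
    (hA : Pairwise (Disjoint on A)) (hAB : ∀ i, A i ⊆ B i) :
    ∃ H : ι → Set α, Pairwise (Disjoint on H) ∧ (∀ i, A i ⊆ H i) ∧ (∀ i, H i ⊆ B i) ∧
      ⋃ i, H i = ⋃ i, B i := by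
  have exists_owner (x : ⋃ i, B i) : ∃ i, (x : α) ∈ B i ∧ ∀ j, (x : α) ∈ A j → i = j := by
    by_cases hx : ∃ i, (x : α) ∈ A i
    · obtain ⟨i, hi⟩ := hx
      exact ⟨i, hAB i hi, fun j hj ↦ hA.eq (Set.not_disjoint_iff.2 ⟨x, hi, hj⟩)⟩
    · obtain ⟨i, hi⟩ := Set.mem_iUnion.1 x.2
      exact ⟨i, hi, fun j hj ↦ absurd ⟨j, hj⟩ hx⟩
  choose owner mem_owner owner_eq using exists_owner
  have fiber_subset (i : ι) : Subtype.val '' (owner ⁻¹' {i}) ⊆ B i := by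
    rintro _ ⟨x, rfl, rfl⟩
    exact mem_owner x
  refine ⟨fun i ↦ Subtype.val '' (owner ⁻¹' {i}), fun i j hij ↦ ?_, fun i x hx ↦ ?_, fiber_subset,
    (Set.iUnion_mono fiber_subset).antisymm fun x hx ↦ ?_⟩
  · exact Set.disjoint_image_of_injective Subtype.val_injective (pairwise_disjoint_fiber owner hij)
  · exact ⟨⟨x, Set.mem_iUnion.2 ⟨i, hAB i hx⟩⟩, owner_eq _ i hx, rfl⟩
  · exact Set.mem_iUnion.2 ⟨owner ⟨x, hx⟩, ⟨x, hx⟩, rfl, rfl⟩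

theorem exists_pairwiseDisjoint_subfamily_inter_nonempty {ι α : Type*} (B : ι → Set α) (t : Set ι)
    (hB : ∀ a ∈ t, (B a).Nonempty) :
    ∃ u ⊆ t, u.PairwiseDisjoint B ∧ ∀ a ∈ t, ∃ b ∈ u, (B a ∩ B b).Nonempty := by
  -- With all radii equal, the Vitali covering lemma reduces to the choice of a maximal family.
  obtain ⟨u, hut, hu, hcover⟩ := Vitali.exists_disjoint_subfamily_covering_enlargement
    B t (fun _ ↦ 1) 2 one_lt_two (fun _ _ ↦ zero_le_one) 1 (fun _ _ ↦ le_rfl) hB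
  refine ⟨u, hut, hu, fun a ha ↦ ?_⟩
  obtain ⟨b, hb, hab, -⟩ := hcover a ha
  exact ⟨b, hb, hab⟩

section

variable {V : Type*} {G : SimpleGraph V}

theorem exists_walk_length_le_of_edist_le {u v : V} {k : ℕ} (h : G.edist u v ≤ k) :
    ∃ w : G.Walk u v, w.length ≤ k := by
  obtain ⟨w, hw⟩ := SimpleGraph.exists_walk_of_edist_ne_top (h.trans_lt (ENat.natCast_lt_top k)).ne
  exact ⟨w, by exact_mod_cast hw.trans_le h⟩

/- Mathlib's graph balls are open: `G.ball c (r + 1)` is the set of vertices at distance at most `r`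
from `c`. -/
theorem edist_le_add_of_mem_ball {c u v : V} {r s : ℕ} (hu : u ∈ G.ball c (r + 1))
    (hv : v ∈ G.ball c (s + 1)) : G.edist u v ≤ r + s := by
  have huc : G.edist u c ≤ r := ENat.lt_natCast_add_one_iff.1 hu
  have hcv : G.edist c v ≤ s := SimpleGraph.edist_comm.trans_le (ENat.lt_natCast_add_one_iff.1 hv)
  exact SimpleGraph.edist_triangle.trans (add_le_add huc hcv)

variable (G)

theorem encard_ball_two (c : V) : (G.ball c 2).encard = (G.neighborSet c).encard + 1 := by
  rw [SimpleGraph.ball_two, Set.encard_insert_of_notMem G.notMem_neighborSet_self]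

theorem exists_pairwiseDisjoint_balls_covering (S : Set V) (r : ℕ) :
    ∃ C ⊆ S, C.PairwiseDisjoint (fun c ↦ G.ball c (r + 1)) ∧
      S ⊆ ⋃ c : C, G.ball c (2 * r + 1) := by
  obtain ⟨C, hCS, hdisj, hmeet⟩ := exists_pairwiseDisjoint_subfamily_inter_nonempty
    (fun c ↦ G.ball c (r + 1)) S fun c _ ↦ ⟨c, SimpleGraph.mem_ball_self (by simp)⟩
  refine ⟨C, hCS, hdisj, fun v hv ↦ ?_⟩
  obtain ⟨c, hc, x, hxv, hxc⟩ := hmeet v hv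
  have hvc : G.edist v c ≤ r + r := edist_le_add_of_mem_ball
    (SimpleGraph.mem_ball_comm.1 hxv) (SimpleGraph.mem_ball_comm.1 hxc)
  rw [← two_mul] at hvc
  exact Set.mem_iUnion.2 ⟨⟨c, hc⟩, hvc.trans_lt (by exact_mod_cast Nat.lt_succ_self (2 * r))⟩

theorem exists_disjoint_clusters_covering (S : Set V) (r : ℕ) :
    ∃ C ⊆ S, ∃ H : C → Set V, Pairwise (Disjoint on H) ∧ (∀ c : C, G.ball c (r + 1) ⊆ H c) ∧
      (∀ c : C, H c ⊆ G.ball c (2 * r + 1)) ∧ S ⊆ ⋃ c, H c := by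
  obtain ⟨C, hCS, hdisj, hcover⟩ := exists_pairwiseDisjoint_balls_covering G S r
  have hballs (c : C) : G.ball c (r + 1) ⊆ G.ball c (2 * r + 1) :=
    SimpleGraph.ball_mono (by exact_mod_cast (by lia : r + 1 ≤ 2 * r + 1))
  obtain ⟨H, hH, hinner, houter, hunion⟩ :=
    exists_pairwise_disjoint_between (hdisj.subtype _ _) hballs
  exact ⟨C, hCS, H, hH, hinner, houter, hunion ▸ hcover⟩

theorem cluster_decomposition_general (d : ℕ) :
    ∃ (C : Set V) (H : C → Set V) (R : Set V),
      Pairwise (Disjoint on H) ∧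
      (∀ c, Disjoint R (H c)) ∧
      (R ∪ ⋃ c, H c = Set.univ) ∧
      (∀ c, d < (H c).encard) ∧
      (∀ c, ∀ u ∈ H c, ∀ v ∈ H c, ∃ w : G.Walk u v, w.length ≤ 4) ∧
      (∀ u ∈ R, (G.neighborSet u).encard < d) := by
  obtain ⟨C, hC, H, hdisj, hinner, houter, hcover⟩ :=
    exists_disjoint_clusters_covering G {v | d ≤ (G.neighborSet v).encard} 1
  refine ⟨C, H, (⋃ c, H c)ᶜ, hdisj,
    fun c ↦ disjoint_compl_left.mono_right (Set.subset_iUnion H c), Set.compl_union_self _,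
    fun c ↦ ?_, fun c u hu v hv ↦ ?_, fun u hu ↦ not_le.1 fun hdu ↦ hu (hcover hdu)⟩
  · have hball : G.ball (c : V) 2 ⊆ H c := by simpa [one_add_one_eq_two] using hinner c
    calc (d : ℕ∞) < d + 1 := by exact_mod_cast d.lt_succ_self
      _ ≤ (G.neighborSet c).encard + 1 := by gcongr; exact hC c.2
      _ = (G.ball (c : V) 2).encard := (encard_ball_two G c).symm
      _ ≤ (H c).encard := Set.encard_le_encard hball
  · have huv : G.edist u v ≤ (2 : ℕ) + (2 : ℕ) :=
      edist_le_add_of_mem_ball (by simpa using houter c hu) (by simpa using houter c hv)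
    exact exists_walk_length_le_of_edist_le (k := 4) (huv.trans (by norm_num))

end

/-- **Decomposition lemma.** Let `G` be a finite simple graph on `n` vertices and
`1 ≤ d ≤ n`. Then the vertex set can be partitioned into pairwise disjoint sets
`R, H 1, …, H h` such that each `H i` has more than `d` vertices, any two vertices of
`H i` are joined by a walk in `G` of length at most `4` (weak diameter at most `4`),
and every vertex of `R` has degree less than `d` in `G`. -/
theorem cluster_decomposition {V : Type*} [Fintype V] [DecidableEq V]
    (G : SimpleGraph V) [DecidableRel G.Adj] (d : ℕ)
    (hd1 : 1 ≤ d) (hdn : d ≤ Fintype.card V) :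
    ∃ (h : ℕ) (H : Fin h → Finset V) (R : Finset V),
      (∀ i j : Fin h, i ≠ j → Disjoint (H i) (H j)) ∧
      (∀ i : Fin h, Disjoint R (H i)) ∧
      (R ∪ Finset.univ.biUnion H = Finset.univ) ∧
      (∀ i : Fin h, d < (H i).card) ∧
      (∀ i : Fin h, ∀ u ∈ H i, ∀ v ∈ H i, ∃ w : G.Walk u v, w.length ≤ 4) ∧
      (∀ u ∈ R, G.degree u < d) := by
  obtain ⟨C, H, R, hdisj, hR, hunion, hcard, hwalk, hdeg⟩ := cluster_decomposition_general G d
  lift R to Finset V using R.toFinite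
  lift H to C → Finset V using fun c ↦ (H c).toFinite
  let e : Fin (Nat.card C) ≃ C := (Finite.equivFin C).symm
  refine ⟨Nat.card C, fun i ↦ H (e i), R,
    fun i j hij ↦ Finset.disjoint_coe.1 (hdisj (e.injective.ne hij)),
    fun i ↦ Finset.disjoint_coe.1 (hR (e i)), ?_, fun i ↦ ?_, fun i ↦ hwalk (e i), ?_⟩
  · rw [← e.surjective.iUnion_comp] at hunion
    simpa only [← Finset.coe_inj, Finset.coe_union, Finset.coe_biUnion, Finset.coe_univ,
      Set.mem_univ, Set.iUnion_true] using hunion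
  · simpa using hcard (e i)
  · simpa [← SimpleGraph.coe_neighborFinset] using hdeg
end

section
/- Let G be a finite simple graph on n ≥ 2 vertices and let d be an integer with 1 ≤ d ≤ n. Then there exists a set S of vertices with |S| ≤ ⌈(n/d)·(ln n + 1)⌉ such that every vertex u with deg_G(u) ≥ d is adjacent in G to some vertex of S. -/
/-!
Greedy covering. Every vertex of degree at least `d` that is not yet hit has at least `d`
neighbours, so by double counting some vertex is adjacent to at least a fraction `d / n` of these
unhit vertices. Choosing such a vertex `k` times leaves at most
`n * (1 - d / n) ^ k ≤ n * exp (-k * d / n)` of them unhit, which is less than one as soon as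
`n * log n < k * d`. The argument only sees a relation between two finite sets.
-/

lemma monotone_log_natCast : Monotone fun n : ℕ ↦ Real.log n := by
  intro m n hmn
  obtain rfl | hm := m.eq_zero_or_pos
  · simpa using Real.log_natCast_nonneg n
  · exact Real.log_le_log (mod_cast hm) (mod_cast hmn)

lemma mul_one_sub_pow_lt_one {x p : ℝ} {k : ℕ} (hx : 0 < x) (hp : p ≤ 1)
    (hlog : Real.log x < k * p) : x * (1 - p) ^ k < 1 :=
  calc x * (1 - p) ^ k
      ≤ x * Real.exp (-p) ^ k := by
        have : 0 ≤ 1 - p := sub_nonneg.2 hp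
        gcongr
        exact Real.one_sub_le_exp_neg p
    _ = Real.exp (Real.log x - k * p) := by
        rw [← Real.exp_nat_mul, sub_eq_add_neg, Real.exp_add, Real.exp_log hx, mul_neg]
    _ < 1 := Real.exp_lt_one_iff.2 (sub_neg.2 hlog)

lemma mul_lt_ceil_div_mul_mul {n d x y : ℝ} (hn : 0 < n) (hd : 0 < d) (hxy : x < y) :
    n * x < ⌈n / d * y⌉₊ * d :=
  calc n * x < n * y := by gcongr
    _ = n / d * y * d := by field_simp
    _ ≤ ⌈n / d * y⌉₊ * d := by gcongr; exact Nat.le_ceil _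

section Greedy

open Finset

variable {α β : Type*} {r : α → β → Prop} [∀ a b, Decidable (r a b)]
  {A : Finset α} {B : Finset β} {d : ℕ}

/-- The elements of `A` not yet hit by the partial hitting set `S`, where `b` hits `a` when
`r a b`. The greedy algorithm shrinks this set to `∅`. -/
def unhit (r : α → β → Prop) [∀ a b, Decidable (r a b)] (A : Finset α) (S : Finset β) : Finset α :=
  {a ∈ A | ∀ b ∈ S, ¬ r a b}

lemma unhit_subset (S : Finset β) : unhit r A S ⊆ A :=
  filter_subset _ _

lemma unhit_eq_empty_iff {S : Finset β} : unhit r A S = ∅ ↔ ∀ a ∈ A, ∃ b ∈ S, r a b := by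
  simp [unhit, filter_eq_empty_iff]

lemma unhit_insert [DecidableEq β] (b : β) (S : Finset β) :
    unhit r A (insert b S) = unhit r (unhit r A {b}) S := by
  simp [unhit, filter_filter]

lemma card_bipartiteBelow_add_card_unhit_singleton (b : β) :
    #(A.bipartiteBelow r b) + #(unhit r A {b}) = #A := by
  simpa [unhit, bipartiteBelow] using card_filter_add_card_filter_not (s := A) (r · b)

lemma exists_card_mul_le_card_mul_card_bipartiteBelow (hB : B.Nonempty)
    (hdeg : ∀ a ∈ A, d ≤ #(B.bipartiteAbove r a)) :
    ∃ b ∈ B, #A * d ≤ #B * #(A.bipartiteBelow r b) := by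
  obtain ⟨b, hb, hmax⟩ := exists_max_image B (fun b ↦ #(A.bipartiteBelow r b)) hB
  exact ⟨b, hb, card_mul_le_card_mul r hdeg hmax⟩

lemma exists_card_unhit_singleton_le (hB : B.Nonempty)
    (hdeg : ∀ a ∈ A, d ≤ #(B.bipartiteAbove r a)) :
    ∃ b ∈ B, (#(unhit r A {b}) : ℝ) ≤ #A * (1 - d / #B) := by
  obtain ⟨b, hb, hcount⟩ := exists_card_mul_le_card_mul_card_bipartiteBelow hB hdeg
  have hB_pos : (0 : ℝ) < #B := mod_cast hB.card_pos
  have hhit : (#A * d / #B : ℝ) ≤ #(A.bipartiteBelow r b) := by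
    rw [div_le_iff₀' hB_pos]
    exact_mod_cast hcount
  have hsplit : (#(A.bipartiteBelow r b) + #(unhit r A {b}) : ℝ) = #A :=
    mod_cast card_bipartiteBelow_add_card_unhit_singleton b
  refine ⟨b, hb, ?_⟩
  rw [mul_sub, mul_one, ← mul_div_assoc]
  linarith

lemma exists_subset_card_unhit_le (hB : B.Nonempty)
    (hdeg : ∀ a ∈ A, d ≤ #(B.bipartiteAbove r a)) (k : ℕ) :
    ∃ S ⊆ B, #S ≤ k ∧ (#(unhit r A S) : ℝ) ≤ #A * (1 - d / #B) ^ k := by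
  classical
  induction k generalizing A with
  | zero => exact ⟨∅, by simp [unhit]⟩
  | succ k ih =>
    obtain rfl | ⟨a, ha⟩ := A.eq_empty_or_nonempty
    · exact ⟨∅, by simp [unhit]⟩
    have hdB : (d : ℝ) ≤ #B := mod_cast (hdeg a ha).trans (card_le_card (filter_subset _ _))
    have hq : (0 : ℝ) ≤ 1 - d / #B := sub_nonneg.2 (div_le_one_of_le₀ hdB (by positivity))
    obtain ⟨b, hb, hstep⟩ := exists_card_unhit_singleton_le hB hdeg
    obtain ⟨S, hSB, hSk, hS⟩ := ih fun a ha ↦ hdeg a (unhit_subset (r := r) {b} ha)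
    refine ⟨insert b S, insert_subset hb hSB, (card_insert_le b S).trans (by gcongr), ?_⟩
    calc (#(unhit r A (insert b S)) : ℝ)
        ≤ #(unhit r A {b}) * (1 - d / #B) ^ k := by rwa [unhit_insert]
      _ ≤ #A * (1 - d / #B) * (1 - d / #B) ^ k := by gcongr
      _ = #A * (1 - d / #B) ^ (k + 1) := by rw [pow_succ', mul_assoc]

theorem hitting_set_general {k : ℕ} (hdeg : ∀ a ∈ A, d ≤ #(B.bipartiteAbove r a))
    (hk : #B * Real.log #A < k * d) : ∃ S ⊆ B, #S ≤ k ∧ ∀ a ∈ A, ∃ b ∈ S, r a b := by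
  obtain rfl | ⟨a, ha⟩ := A.eq_empty_or_nonempty
  · exact ⟨∅, by simp⟩
  have hdB : d ≤ #B := (hdeg a ha).trans (card_le_card (filter_subset _ _))
  have hd : (0 : ℝ) < d := by
    have : (0 : ℝ) < k * d := lt_of_le_of_lt (by positivity) hk
    exact pos_of_mul_pos_right this k.cast_nonneg
  have hB : (0 : ℝ) < #B := hd.trans_le (mod_cast hdB)
  obtain ⟨S, hSB, hSk, hS⟩ := exists_subset_card_unhit_le (card_pos.1 (mod_cast hB)) hdeg k
  refine ⟨S, hSB, hSk, unhit_eq_empty_iff.1 (card_eq_zero.1 (Nat.lt_one_iff.1 ?_))⟩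
  have hlt : (#A : ℝ) * (1 - d / #B) ^ k < 1 := by
    refine mul_one_sub_pow_lt_one (mod_cast card_pos.2 ⟨a, ha⟩) ?_ ?_
    · exact (div_le_one hB).2 (mod_cast hdB)
    · rwa [← mul_div_assoc, lt_div_iff₀' hB]
  exact_mod_cast hS.trans_lt hlt

end Greedy

/-- **Hitting set.** In a finite simple graph on `n ≥ 2` vertices, for any `1 ≤ d ≤ n`
there is a set `S` of at most `⌈(n/d)·(ln n + 1)⌉` vertices such that every vertex of
degree at least `d` is adjacent to some vertex of `S`. -/
theorem hitting_set {V : Type*} [Fintype V] [DecidableEq V]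
    (G : SimpleGraph V) [DecidableRel G.Adj] (n d : ℕ)
    (hn : Fintype.card V = n) (hn2 : 2 ≤ n) (hd1 : 1 ≤ d) (hdn : d ≤ n) :
    ∃ S : Finset V,
      S.card ≤ ⌈((n : ℝ) / (d : ℝ)) * (Real.log n + 1)⌉₊ ∧
      ∀ u : V, d ≤ G.degree u → ∃ s ∈ S, G.Adj u s := by
  let A : Finset V := {u | d ≤ G.degree u}
  have hdeg : ∀ u ∈ A, d ≤ (Finset.univ.bipartiteAbove G.Adj u).card := fun u hu ↦ by
    simpa [A, Finset.bipartiteAbove, ← G.neighborFinset_eq_filter] using hu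
  have hlog : Real.log A.card < Real.log n + 1 :=
    (monotone_log_natCast (hn ▸ A.card_le_univ)).trans_lt (lt_add_one _)
  obtain ⟨S, -, hcard, hS⟩ := hitting_set_general (B := Finset.univ) hdeg <| by
    rw [Finset.card_univ, hn]
    exact mul_lt_ceil_div_mul_mul (mod_cast (by omega)) (mod_cast hd1) hlog
  exact ⟨S, hcard, fun u hu ↦ hS u (by simpa [A] using hu)⟩
end

section
/- Let n₁, n₂, n₃ ≥ 1 and L ≥ 0 be integers, and let A : [n₁] × [n₂] → ℤ and B : [n₂] × [n₃] → ℤ be matrices with |B[k,j] − B[k,j']| ≤ L for all k ∈ [n₂] and all j, j' ∈ [n₃]. Define Δ_k = min_{j ∈ [n₃]} B[k,j], A'[i,k] = A[i,k] + Δ_k, m_i = min_{k ∈ [n₂]} A'[i,k], and K_i = {k ∈ [n₂] : A'[i,k] ≤ m_i + L}. Then: (i) K_i is nonempty; (ii) for every k ∈ K_i and every j ∈ [n₃], both A'[i,k] − m_i and B[k,j] − Δ_k lie in {0, 1, …, L}; and (iii) for all i ∈ [n₁], j ∈ [n₃]: min_{k ∈ [n₂]} (A[i,k] + B[k,j]) =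 m_i + min_{k ∈ K_i} ((A'[i,k] − m_i) + (B[k,j] − Δ_k)). -/
/-!
Write `A i k + B k j = A' i k + (B k j - Δ k)`, where the second summand lies in `[0, L]`. An index
`k` minimizing this sum satisfies `A' i k ≤ m i + L`: it does at least as well as a minimizer of
`A' i`, whose sum is at most `m i + L`. Hence restricting to `K_i` does not change the minimum, and
subtracting `m i` only translates it.
-/

open Set

theorem sub_mem_Icc_of_isLeast_range {ι G : Type*} [AddCommGroup G] [Lattice G]
    [IsOrderedAddMonoid G] {f : ι → G} {a L : G} (ha : IsLeast (range f) a)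
    (hf : ∀ x y, |f x - f y| ≤ L) (x : ι) : f x - a ∈ Icc 0 L := by
  obtain ⟨y, rfl⟩ := ha.1
  exact ⟨sub_nonneg.mpr (ha.2 (mem_range_self x)), (le_abs_self _).trans (hf x y)⟩

theorem isLeast_image_add_setOf_le {κ M : Type*} [AddCommMonoid M] [Preorder M]
    [IsOrderedAddMonoid M] {u v : κ → M} {m L c : M} (hm : m ∈ range u)
    (hv : ∀ k, v k ∈ Icc 0 L) (hc : IsLeast (range fun k => u k + v k) c) :
    IsLeast ((fun k => u k + v k) '' {k | u k ≤ m + L}) c := by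
  obtain ⟨k₀, rfl⟩ := hm
  obtain ⟨k, rfl⟩ := hc.1
  have hk : u k ≤ u k₀ + L := calc
    u k ≤ u k + v k := le_add_of_nonneg_right (hv k).1
    _ ≤ u k₀ + v k₀ := hc.2 (mem_range_self k₀)
    _ ≤ u k₀ + L := add_le_add_right (hv k₀).2 _
  exact ⟨mem_image_of_mem _ hk, lowerBounds_mono_set (image_subset_range _ _) hc.2⟩

theorem isLeast_image_sub_const {κ G : Type*} [AddCommGroup G] [Preorder G]
    [IsOrderedAddMonoid G] {f : κ → G} {s : Set κ} {c : G} (hc : IsLeast (f '' s) c) (m : G) :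
    IsLeast ((fun k => f k - m) '' s) (c - m) := by
  simpa only [image_image] using Monotone.map_isLeast (fun _ _ h => sub_le_sub_right h m) hc

theorem minplus_shift_general {ι κ τ G : Type*} [AddCommGroup G] [Lattice G]
    [IsOrderedAddMonoid G] {L : G} {A : ι → κ → G} {B : κ → τ → G}
    (hB : ∀ k j j', |B k j - B k j'| ≤ L)
    {Δ : κ → G} (hΔ : ∀ k, IsLeast (range (B k)) (Δ k))
    {A' : ι → κ → G} (hA' : ∀ i k, A' i k = A i k + Δ k)
    {m : ι → G} (hm : ∀ i, IsLeast (range (A' i)) (m i))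
    {C : ι → τ → G} (hC : ∀ i j, IsLeast (range fun k => A i k + B k j) (C i j)) (i : ι) :
    {k | A' i k ≤ m i + L}.Nonempty ∧
      (∀ k, A' i k ≤ m i + L → A' i k - m i ∈ Icc 0 L ∧ ∀ j, B k j - Δ k ∈ Icc 0 L) ∧
      ∀ j, IsLeast ((fun k => (A' i k - m i) + (B k j - Δ k)) '' {k | A' i k ≤ m i + L})
        (C i j - m i) := by
  have hBΔ (k : κ) (j : τ) : B k j - Δ k ∈ Icc 0 L :=
    sub_mem_Icc_of_isLeast_range (hΔ k) (hB k) j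
  refine ⟨?_, fun k hk => ⟨⟨?_, ?_⟩, hBΔ k⟩, fun j => ?_⟩
  · obtain ⟨k, hk⟩ := (hm i).1
    obtain ⟨j, -⟩ := (hΔ k).1
    have hL : 0 ≤ L := (hBΔ k j).1.trans (hBΔ k j).2
    exact ⟨k, hk.le.trans (le_add_of_nonneg_right hL)⟩
  · exact sub_nonneg.mpr ((hm i).2 (mem_range_self k))
  · exact sub_le_iff_le_add'.mpr hk
  · have hsum : IsLeast (range fun k => A' i k + (B k j - Δ k)) (C i j) := by
      simpa only [hA', add_add_sub_cancel] using hC i j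
    simpa only [sub_add_eq_add_sub] using
      isLeast_image_sub_const (isLeast_image_add_setOf_le (hm i).1 (hBΔ · j) hsum) (m i)

/-- Reduction of a `(min,+)`-product with row-bounded-difference right factor to a
product of matrices with entries in `{0, …, L}`:  with `Δ k = min_j B[k,j]`,
`A'[i,k] = A[i,k] + Δ k`, `m i = min_k A'[i,k]` and `K_i = {k : A'[i,k] ≤ m i + L}`,
the set `K_i` is nonempty, the shifted entries lie in `{0, …, L}`, and
`min_k (A[i,k] + B[k,j]) = m i + min_{k ∈ K_i} ((A'[i,k] − m i) + (B[k,j] − Δ k))`. -/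
theorem minplus_shift (n₁ n₂ n₃ : ℕ) (h₁ : 1 ≤ n₁) (h₂ : 1 ≤ n₂) (h₃ : 1 ≤ n₃)
    (L : ℤ) (hL : 0 ≤ L)
    (A : Fin n₁ → Fin n₂ → ℤ) (B : Fin n₂ → Fin n₃ → ℤ)
    (hB : ∀ (k : Fin n₂) (j j' : Fin n₃), |B k j - B k j'| ≤ L)
    (Δ : Fin n₂ → ℤ) (hΔ : ∀ k, IsLeast (Set.range (B k)) (Δ k))
    (A' : Fin n₁ → Fin n₂ → ℤ) (hA' : ∀ i k, A' i k = A i k + Δ k)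
    (m : Fin n₁ → ℤ) (hm : ∀ i, IsLeast (Set.range (A' i)) (m i))
    (C : Fin n₁ → Fin n₃ → ℤ)
    (hC : ∀ i j, IsLeast (Set.range fun k => A i k + B k j) (C i j)) :
    ∀ i : Fin n₁,
      (∃ k, A' i k ≤ m i + L) ∧
      (∀ k, A' i k ≤ m i + L →
        (0 ≤ A' i k - m i ∧ A' i k - m i ≤ L) ∧
        ∀ j, 0 ≤ B k j - Δ k ∧ B k j - Δ k ≤ L) ∧
      (∀ j : Fin n₃,
        IsLeast {x : ℤ | ∃ k, A' i k ≤ m i + L ∧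
          (A' i k - m i) + (B k j - Δ k) = x} (C i j - m i)) :=
  minplus_shift_general hB hΔ hA' hm hC
end

section
/- Fix integers h, d, s ≥ 1 and L ≥ 1. The indices i ∈ [hd] are partitioned into h contiguous groups of size d, where î = ⌈i/d⌉ denotes the group containing i. Let A : [hd] × [s] → ℤ satisfy |A[i,k] − A[i',k]| ≤ L for all k ∈ [s] and all i, i' with î = î', and let B : [s] × [hd] → ℤ satisfy |B[k,j] − B[k,j']| ≤ L for all k ∈ [s] and all j, j' with ĵ = ĵ'. Define A'[g,k] = ⌊(min_{i : î = g} A[i,k]) / L⌋ and B'[k,g] = ⌊(min_{j : ĵ = g} B[k,j]) / L⌋ (integer floor division), C[i,j] = min_{k ∈ [s]} (A[i,k] + B[k,j]) and C'[g,g'] = min_{k ∈ [s]} (A'[g,k] + B'[k,g']). Then 0 ≤ C[i,j] − L·C'[î,ĵ] < 4L for all i, j ∈ [hd]. -/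
/-!
An entry of `A` or `B` exceeds `L` times its rounded group minimum by at least `0` and by less
than `2L`: at most `L` comes from the spread within the group and less than `L` from the floor.
So every sum `A[i,k] + B[k,j]` exceeds `L (A'[î,k] + B'[k,ĵ])` by an amount in `[0, 4L)`, and a
minimum over `k` inherits bounds that hold for every `k`.
-/

open Set

section OrderedGroup

variable {ι κ α : Type*} [AddCommGroup α] [PartialOrder α] [IsOrderedAddMonoid α]

theorem sub_mem_Icc_of_isLeast_range_s8 {f : ι → α} {m δ : α} (hm : IsLeast (range f) m)
    (hf : ∀ i i', f i - f i' ≤ δ) (i : ι) : f i - m ∈ Icc 0 δ := by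
  obtain ⟨⟨i', rfl⟩, hle⟩ := hm
  exact ⟨sub_nonneg.2 (hle (mem_range_self i)), hf i i'⟩

theorem isLeast_range_sub_isLeast_range_mem_Ico {f g : κ → α} {a b δ : α}
    (ha : IsLeast (range f) a) (hb : IsLeast (range g) b) (hfg : ∀ k, f k - g k ∈ Ico 0 δ) :
    a - b ∈ Ico 0 δ := by
  obtain ⟨⟨k, rfl⟩, ha_le⟩ := ha
  obtain ⟨⟨l, rfl⟩, hb_le⟩ := hb
  constructor
  · exact (hfg k).1.trans (sub_le_sub_left (hb_le (mem_range_self k)) _)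
  · exact (sub_le_sub_right (ha_le (mem_range_self l)) _).trans_lt (hfg l).2

end OrderedGroup

section OrderedRing

variable {R : Type*} [Ring R] [PartialOrder R] [IsOrderedRing R] {L : R}

theorem sub_mul_mem_Ico_of_isLeast_range {ι : Type*} {f : ι → R} {m q : R}
    (hm : IsLeast (range f) m) (hf : ∀ i i', f i - f i' ≤ L) (hq : m - L * q ∈ Ico 0 L) (i : ι) :
    f i - L * q ∈ Ico 0 (2 * L) := by
  have hspread : f i - m ∈ Icc 0 L := sub_mem_Icc_of_isLeast_range_s8 hm hf i
  rw [← sub_add_sub_cancel (f i) m, two_mul]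
  exact ⟨add_nonneg hspread.1 hq.1, add_lt_add_of_le_of_lt hspread.2 hq.2⟩

theorem isLeast_range_mul_left {κ : Type*} {f : κ → R} {a : R} (hL : 0 ≤ L)
    (ha : IsLeast (range f) a) : IsLeast (range fun k => L * f k) (L * a) := by
  simpa only [← range_comp, Function.comp_def] using
    (monotone_mul_left_of_nonneg hL).map_isLeast ha

/-- For `0 < L`, the rounding hypotheses `hA'` and `hB'` hold for `A' = ⌊MA / L⌋` and
`B' = ⌊MB / L⌋`, both with integer floor division and with the floor in an ordered field. -/
theorem group_rounding_minplus_approx_general {G H κ : Type*} {ι : G → Type*} {τ : H → Type*}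
    {A : ∀ g, ι g → κ → R} {B : κ → ∀ g', τ g' → R}
    (hA : ∀ g i i' k, A g i k - A g i' k ≤ L) (hB : ∀ k g' j j', B k g' j - B k g' j' ≤ L)
    {MA : G → κ → R} (hMA : ∀ g k, IsLeast (range fun i => A g i k) (MA g k))
    {MB : κ → H → R} (hMB : ∀ k g', IsLeast (range fun j => B k g' j) (MB k g'))
    {A' : G → κ → R} (hA' : ∀ g k, MA g k - L * A' g k ∈ Ico 0 L)
    {B' : κ → H → R} (hB' : ∀ k g', MB k g' - L * B' k g' ∈ Ico 0 L)
    {C : ∀ g, ι g → ∀ g', τ g' → R}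
    (hC : ∀ g i g' j, IsLeast (range fun k => A g i k + B k g' j) (C g i g' j))
    {C' : G → H → R} (hC' : ∀ g g', IsLeast (range fun k => A' g k + B' k g') (C' g g'))
    (g : G) (i : ι g) (g' : H) (j : τ g') :
    C g i g' j - L * C' g g' ∈ Ico 0 (4 * L) := by
  have hL : 0 ≤ L := by
    obtain ⟨k, -⟩ := (hC g i g' j).1
    exact (hA' g k).1.trans (hA' g k).2.le
  refine isLeast_range_sub_isLeast_range_mem_Ico (hC g i g' j)
    (isLeast_range_mul_left hL (hC' g g')) fun k => ?_
  have hAk : A g i k - L * A' g k ∈ Ico 0 (2 * L) :=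
    sub_mul_mem_Ico_of_isLeast_range (hMA g k) (fun i i' => hA g i i' k) (hA' g k) i
  have hBk : B k g' j - L * B' k g' ∈ Ico 0 (2 * L) :=
    sub_mul_mem_Ico_of_isLeast_range (hMB k g') (hB k g') (hB' k g') j
  have hfour : 4 * L = 2 * L + 2 * L := by rw [← add_mul]; norm_num
  rw [mul_add, add_sub_add_comm, hfour]
  exact ⟨add_nonneg hAk.1 hBk.1, add_lt_add hAk.2 hBk.2⟩

end OrderedRing

theorem sub_mul_fdiv_mem_Ico {L : ℤ} (hL : 0 < L) (m : ℤ) : m - L * m.fdiv L ∈ Ico 0 L := by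
  rw [← Int.fmod_def]
  exact ⟨Int.fmod_nonneg_of_pos m hL, Int.fmod_lt_of_pos m hL⟩

/-- With indices partitioned into `h` groups of size `d` (an index in group `g` is
written as a pair `(g, i) : Fin h × Fin d`), for group-bounded-difference matrices
`A`, `B`, rounded group representatives `A'[g,k] = ⌊(min_i A[(g,i),k])/L⌋`,
`B'[k,g] = ⌊(min_j B[k,(g,j)])/L⌋`, and `(min,+)`-products
`C[(g,i),(g',j)] = min_k (A[(g,i),k] + B[k,(g',j)])`,
`C'[g,g'] = min_k (A'[g,k] + B'[k,g'])`, we have `0 ≤ C − L·C' < 4L` entrywise. -/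
theorem group_rounding_minplus_approx (h d s : ℕ) (hh : 1 ≤ h) (hd : 1 ≤ d) (hs : 1 ≤ s)
    (L : ℤ) (hL : 1 ≤ L)
    (A : Fin h → Fin d → Fin s → ℤ) (B : Fin s → Fin h → Fin d → ℤ)
    (hA : ∀ (g : Fin h) (i i' : Fin d) (k : Fin s), |A g i k - A g i' k| ≤ L)
    (hB : ∀ (k : Fin s) (g : Fin h) (j j' : Fin d), |B k g j - B k g j'| ≤ L)
    (MA : Fin h → Fin s → ℤ)
    (hMA : ∀ g k, IsLeast (Set.range fun i => A g i k) (MA g k))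
    (MB : Fin s → Fin h → ℤ)
    (hMB : ∀ k g, IsLeast (Set.range fun j => B k g j) (MB k g))
    (A' : Fin h → Fin s → ℤ) (hA' : ∀ g k, A' g k = Int.fdiv (MA g k) L)
    (B' : Fin s → Fin h → ℤ) (hB' : ∀ k g, B' k g = Int.fdiv (MB k g) L)
    (C : Fin h → Fin d → Fin h → Fin d → ℤ)
    (hC : ∀ g i g' j,
      IsLeast (Set.range fun k => A g i k + B k g' j) (C g i g' j))
    (C' : Fin h → Fin h → ℤ)
    (hC' : ∀ g g', IsLeast (Set.range fun k => A' g k + B' k g') (C' g g')) :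
    ∀ g i g' j, 0 ≤ C g i g' j - L * C' g g' ∧
      C g i g' j - L * C' g g' < 4 * L := by
  exact group_rounding_minplus_approx_general
    (fun g i i' k => (le_abs_self _).trans (hA g i i' k))
    (fun k g j j' => (le_abs_self _).trans (hB k g j j')) hMA hMB
    (fun g k => hA' g k ▸ sub_mul_fdiv_mem_Ico hL _)
    (fun k g => hB' k g ▸ sub_mul_fdiv_mem_Ico hL _) hC hC'
end

section
/- Fix integers h, d, s ≥ 1 and L ≥ 1. The indices i ∈ [hd] are partitioned into h contiguous groups of size d, where î = ⌈i/d⌉ denotes the group containing i. Let A : [hd] × [s] → ℤ satisfy |A[i,k] − A[i',k]| ≤ L for all k ∈ [s] and all i, i' with î = î', and let B : [s] × [hd] → ℤ satisfy |B[k,j] − B[k,j']| ≤ L for all k ∈ [s] and all j, j' with ĵ = ĵ'. Define A'[g,k] = ⌊(min_{i : î = g} A[i,k]) / L⌋ and B'[k,g] = ⌊(min_{j : ĵ = g} B[k,j]) / L⌋ (integer floor division), C[i,j] = min_{k ∈ [s]} (A[i,k] + B[k,j]) and C'[g,g'] = min_{k ∈ [s]} (A'[g,k] + B'[k,g']). If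 an index k ∈ [s] is a witness for C[i,j], i.e. A[i,k] + B[k,j] = C[i,j], then |A'[î,k] + B'[k,ĵ] − C'[î,ĵ]| ≤ 3. -/
/-!
Let `k'` attain `C' g g'`. Since `k` is a witness, and every entry exceeds its group infimum by at
most `L`, the infima satisfy `MA g k + MB k g' ≤ MA g k' + MB k' g' + 2L`. Rounding down to a
multiple of `L` only helps on the left and loses less than `L` for each of the two terms on the
right, so the integer `A' g k + B' k g' - C' g g'` is less than `4`.

In an archimedean group, `toIcoDiv hL 0 x` plays the role of `⌊x / L⌋`.
-/

theorem toIcoDiv_add_toIcoDiv_le {α : Type*} [AddCommGroup α] [LinearOrder α]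
    [IsOrderedAddMonoid α] [Archimedean α] {p : α} (hp : 0 < p) (a : α) {x y x' y' : α} {n : ℤ}
    (h : x + y ≤ x' + y' + n • p) :
    toIcoDiv hp a x + toIcoDiv hp a y ≤ toIcoDiv hp a x' + toIcoDiv hp a y' + n + 1 := by
  have lower (z : α) : a + toIcoDiv hp a z • p ≤ z :=
    le_sub_iff_add_le.mp (sub_toIcoDiv_zsmul_mem_Ico hp a z).1
  have upper (z : α) : z < a + p + toIcoDiv hp a z • p :=
    sub_lt_iff_lt_add.mp (sub_toIcoDiv_zsmul_mem_Ico hp a z).2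
  have zsmul_lt : (a + a) + (toIcoDiv hp a x + toIcoDiv hp a y) • p <
      (a + a) + (toIcoDiv hp a x' + toIcoDiv hp a y' + n + 2) • p :=
    calc (a + a) + (toIcoDiv hp a x + toIcoDiv hp a y) • p
        = (a + toIcoDiv hp a x • p) + (a + toIcoDiv hp a y • p) := by module
      _ ≤ x + y := add_le_add (lower x) (lower y)
      _ ≤ x' + y' + n • p := h
      _ < (a + p + toIcoDiv hp a x' • p) + (a + p + toIcoDiv hp a y' • p) + n • p := by
        gcongr
        exacts [upper x', upper y']
      _ = (a + a) + (toIcoDiv hp a x' + toIcoDiv hp a y' + n + 2) • p := by module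
  have := (zsmul_lt_zsmul_iff_left hp).mp (lt_of_add_lt_add_left zsmul_lt)
  omega

theorem fdiv_eq_toIcoDiv {p : ℤ} (hp : 0 < p) (x : ℤ) : x.fdiv p = toIcoDiv hp 0 x := by
  refine (toIcoDiv_eq_of_sub_zsmul_mem_Ico hp ?_).symm
  have sub_eq_fmod : x - x.fdiv p • p = x.fmod p := by
    rw [Int.fmod_def, smul_eq_mul, mul_comm]
  rw [sub_eq_fmod, zero_add]
  exact ⟨Int.fmod_nonneg_of_pos x hp, Int.fmod_lt_of_pos x hp⟩

theorem le_add_of_isGLB_range {α ι : Type*} [AddCommGroup α] [PartialOrder α]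
    [IsOrderedAddMonoid α] {f : ι → α} {m x L : α} (hf : ∀ i, x - f i ≤ L)
    (hm : IsGLB (Set.range f) m) : x ≤ m + L :=
  sub_le_iff_le_add.mp <| hm.2 <| Set.forall_mem_range.mpr fun i => sub_le_comm.mp (hf i)

theorem group_rounding_witness_general {α G H K : Type*} {I : G → Type*} {J : H → Type*}
    [AddCommGroup α] [LinearOrder α] [IsOrderedAddMonoid α] [Archimedean α]
    {L : α} (hL : 0 < L)
    {A : (g : G) → I g → K → α} {B : K → (g' : H) → J g' → α}
    (hA : ∀ g i i' k, |A g i k - A g i' k| ≤ L)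
    (hB : ∀ k g' j j', |B k g' j - B k g' j'| ≤ L)
    {MA : G → K → α} (hMA : ∀ g k, IsGLB (Set.range fun i => A g i k) (MA g k))
    {MB : K → H → α} (hMB : ∀ k g', IsGLB (Set.range fun j => B k g' j) (MB k g'))
    {A' : G → K → ℤ} (hA' : ∀ g k, A' g k = toIcoDiv hL 0 (MA g k))
    {B' : K → H → ℤ} (hB' : ∀ k g', B' k g' = toIcoDiv hL 0 (MB k g'))
    {C : (g : G) → I g → (g' : H) → J g' → α}
    (hC : ∀ g i g' j, IsGLB (Set.range fun k => A g i k + B k g' j) (C g i g' j))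
    {C' : G → H → ℤ}
    (hC' : ∀ g g', IsLeast (Set.range fun k => A' g k + B' k g') (C' g g'))
    (g : G) (i : I g) (g' : H) (j : J g') (k : K) (hk : A g i k + B k g' j = C g i g' j) :
    |A' g k + B' k g' - C' g g'| ≤ 3 := by
  have lower : C' g g' ≤ A' g k + B' k g' := (hC' g g').2 ⟨k, rfl⟩
  obtain ⟨k', hk' : A' g k' + B' k' g' = C' g g'⟩ := (hC' g g').1
  have row_le : A g i k' ≤ MA g k' + L :=
    le_add_of_isGLB_range (fun i' => (le_abs_self _).trans (hA g i i' k')) (hMA g k')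
  have col_le : B k' g' j ≤ MB k' g' + L :=
    le_add_of_isGLB_range (fun j' => (le_abs_self _).trans (hB k' g' j j')) (hMB k' g')
  have infima_le : MA g k + MB k g' ≤ MA g k' + MB k' g' + (2 : ℤ) • L :=
    calc MA g k + MB k g'
        ≤ A g i k + B k g' j := add_le_add ((hMA g k).1 ⟨i, rfl⟩) ((hMB k g').1 ⟨j, rfl⟩)
      _ = C g i g' j := hk
      _ ≤ A g i k' + B k' g' j := (hC g i g' j).1 ⟨k', rfl⟩
      _ ≤ (MA g k' + L) + (MB k' g' + L) := add_le_add row_le col_le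
      _ = MA g k' + MB k' g' + (2 : ℤ) • L := by module
  have upper : A' g k + B' k g' ≤ C' g g' + 2 + 1 := by
    rw [← hk', hA', hA', hB', hB']
    exact toIcoDiv_add_toIcoDiv_le hL 0 infima_le
  exact abs_le.mpr ⟨by linarith, by linarith⟩

/-- In the setting of the group-rounding approximation of a `(min,+)`-product, every
witness `k` of `C[(g,i),(g',j)]` (i.e. `A[(g,i),k] + B[k,(g',j)] = C[(g,i),(g',j)]`)
satisfies `|A'[g,k] + B'[k,g'] − C'[g,g']| ≤ 3`. -/
theorem group_rounding_witness (h d s : ℕ) (hh : 1 ≤ h) (hd : 1 ≤ d) (hs : 1 ≤ s)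
    (L : ℤ) (hL : 1 ≤ L)
    (A : Fin h → Fin d → Fin s → ℤ) (B : Fin s → Fin h → Fin d → ℤ)
    (hA : ∀ (g : Fin h) (i i' : Fin d) (k : Fin s), |A g i k - A g i' k| ≤ L)
    (hB : ∀ (k : Fin s) (g : Fin h) (j j' : Fin d), |B k g j - B k g j'| ≤ L)
    (MA : Fin h → Fin s → ℤ)
    (hMA : ∀ g k, IsLeast (Set.range fun i => A g i k) (MA g k))
    (MB : Fin s → Fin h → ℤ)
    (hMB : ∀ k g, IsLeast (Set.range fun j => B k g j) (MB k g))
    (A' : Fin h → Fin s → ℤ) (hA' : ∀ g k, A' g k = Int.fdiv (MA g k) L)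
    (B' : Fin s → Fin h → ℤ) (hB' : ∀ k g, B' k g = Int.fdiv (MB k g) L)
    (C : Fin h → Fin d → Fin h → Fin d → ℤ)
    (hC : ∀ g i g' j,
      IsLeast (Set.range fun k => A g i k + B k g' j) (C g i g' j))
    (C' : Fin h → Fin h → ℤ)
    (hC' : ∀ g g', IsLeast (Set.range fun k => A' g k + B' k g') (C' g g')) :
    ∀ (g : Fin h) (i : Fin d) (g' : Fin h) (j : Fin d) (k : Fin s),
      A g i k + B k g' j = C g i g' j →
      |A' g k + B' k g' - C' g g'| ≤ 3 :=
  group_rounding_witness_general hL hA hB (fun g k => (hMA g k).isGLB) (fun k g => (hMB k g).isGLB)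
    (fun g k => (hA' g k).trans (fdiv_eq_toIcoDiv hL _))
    (fun k g => (hB' k g).trans (fdiv_eq_toIcoDiv hL _)) (fun g i g' j => (hC g i g' j).isGLB) hC'
end

section
/- Let G be a finite simple graph, let D ≥ 1 be an integer, and let R be a set of vertices such that deg_G(x) < D for every x ∈ R. Let P be a walk from v to r such that M := max_{x ∈ support(P)} deg_G(x) ≥ D, and suppose some vertex in the support of P does not lie in R. Let h be the last vertex along P that does not lie in R, and let ℓ be the number of edges of P strictly after the last occurrence of h. Then the prefix of P from v to h is a walk of length |P| − ℓ whose maximum vertex degree equals M. In particular, if M ∈ [D, 2D] then d_D(v,h) ≤ |P| − ℓ. -/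
/-- The maximum degree of a vertex on (the support of) a walk. -/
def walkMaxDeg {V : Type*} [Fintype V] (G : SimpleGraph V) [DecidableRel G.Adj]
    {u v : V} (p : G.Walk u v) : ℕ :=
  (p.support.map fun x => G.degree x).foldr max 0

/-- `dD G D u v` is the minimum length of a (not necessarily simple) walk from `u`
to `v` whose maximum vertex degree lies in `[D, 2D]`. -/
noncomputable def dD {V : Type*} [Fintype V] (G : SimpleGraph V)
    [DecidableRel G.Adj] (D : ℕ) (u v : V) : ℕ :=
  sInf {n : ℕ | ∃ p : G.Walk u v,
    D ≤ walkMaxDeg G p ∧ walkMaxDeg G p ≤ 2 * D ∧ p.length = n}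

/-!
A vertex of maximum degree on `P` has degree at least `D`, so it is not among the vertices of `P`
strictly after `h`, all of which have smaller degree. It therefore lies on the prefix.
-/

section

variable {V : Type*} [Fintype V] {G : SimpleGraph V} [DecidableRel G.Adj] {u v w : V}

theorem walkMaxDeg_cons (huv : G.Adj u v) (p : G.Walk v w) :
    walkMaxDeg G (p.cons huv) = max (G.degree u) (walkMaxDeg G p) :=
  rfl

theorem degree_le_walkMaxDeg {p : G.Walk u v} {x : V} (hx : x ∈ p.support) :
    G.degree x ≤ walkMaxDeg G p :=
  List.le_max_of_le' 0 (List.mem_map_of_mem hx) le_rfl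

theorem exists_mem_support_degree_eq_walkMaxDeg (p : G.Walk u v) :
    ∃ x ∈ p.support, G.degree x = walkMaxDeg G p := by
  induction p with
  | @nil u => exact ⟨u, by simp, by simp [walkMaxDeg]⟩
  | @cons u v w huv p ih =>
    obtain ⟨x, hx, hdeg⟩ := ih
    rw [walkMaxDeg_cons]
    rcases max_choice (G.degree u) (walkMaxDeg G p) with hmax | hmax
    · exact ⟨u, by simp, hmax.symm⟩
    · exact ⟨x, by simp [hx], hdeg.trans hmax.symm⟩

theorem walkMaxDeg_le_walkMaxDeg_of_support_subset {u' v' : V} {p : G.Walk u v}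
    {q : G.Walk u' v'} (hpq : p.support ⊆ q.support) : walkMaxDeg G p ≤ walkMaxDeg G q := by
  obtain ⟨x, hx, hdeg⟩ := exists_mem_support_degree_eq_walkMaxDeg p
  exact hdeg ▸ degree_le_walkMaxDeg (hpq hx)

theorem walkMaxDeg_append_of_tail_lt {D : ℕ} {p : G.Walk u v} {q : G.Walk v w}
    (hD : D ≤ walkMaxDeg G (p.append q)) (htail : ∀ x ∈ q.support.tail, G.degree x < D) :
    walkMaxDeg G (p.append q) = walkMaxDeg G p := by
  obtain ⟨x, hx, hdeg⟩ := exists_mem_support_degree_eq_walkMaxDeg (p.append q)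
  have hx_tail : x ∉ q.support.tail := fun hxq => (htail x hxq).not_ge (hdeg ▸ hD)
  have hx_prefix : x ∈ p.support := by
    rw [SimpleGraph.Walk.support_append, List.mem_append] at hx
    exact hx.resolve_right hx_tail
  apply le_antisymm
  · exact hdeg ▸ degree_le_walkMaxDeg hx_prefix
  · exact walkMaxDeg_le_walkMaxDeg_of_support_subset (p.support_subset_support_append_left q)

theorem dD_le_length {D : ℕ} {p : G.Walk u v} (hD : D ≤ walkMaxDeg G p)
    (h2D : walkMaxDeg G p ≤ 2 * D) : dD G D u v ≤ p.length :=
  Nat.sInf_le ⟨p, hD, h2D, rfl⟩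

theorem prefix_keeps_max_degree_general {D : ℕ} {p : G.Walk u v} {q : G.Walk v w}
    (hD : D ≤ walkMaxDeg G (p.append q)) (htail : ∀ x ∈ q.support.tail, G.degree x < D) :
    p.length = (p.append q).length - q.length ∧
    walkMaxDeg G p = walkMaxDeg G (p.append q) ∧
    (walkMaxDeg G (p.append q) ≤ 2 * D → dD G D u v ≤ (p.append q).length - q.length) := by
  have hlen : (p.append q).length - q.length = p.length := by
    rw [SimpleGraph.Walk.length_append, Nat.add_sub_cancel]
  have hmax : walkMaxDeg G (p.append q) = walkMaxDeg G p := walkMaxDeg_append_of_tail_lt hD htail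
  rw [hlen, hmax]
  exact ⟨rfl, rfl, dD_le_length (hmax ▸ hD)⟩

end

/-- Let `deg x < D` for all `x ∈ R`, and let `P` be a walk from `v` to `r` with
maximum support degree `M ≥ D` such that some support vertex is outside `R`.  Split
`P = P₁ ++ P₂` at the last occurrence of the last vertex `h ∉ R` (so all vertices of
`P` strictly after it lie in `R`).  Then the prefix `P₁` has length `|P| − |P₂|` and
its maximum vertex degree equals `M`; in particular, if `M ∈ [D, 2D]` then
`dD v h ≤ |P| − |P₂|`. -/
theorem prefix_keeps_max_degree {V : Type*} [Fintype V]
    (G : SimpleGraph V) [DecidableRel G.Adj] (D : ℕ) (hD : 1 ≤ D)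
    (R : Set V) (hR : ∀ x ∈ R, G.degree x < D)
    (v r h : V) (P : G.Walk v r) (P₁ : G.Walk v h) (P₂ : G.Walk h r)
    (hsplit : P = P₁.append P₂)
    (hM : D ≤ walkMaxDeg G P)
    (hhR : h ∉ R)
    (htail : ∀ x ∈ P₂.support.tail, x ∈ R) :
    P₁.length = P.length - P₂.length ∧
    walkMaxDeg G P₁ = walkMaxDeg G P ∧
    (walkMaxDeg G P ≤ 2 * D → dD G D v h ≤ P.length - P₂.length) := by
  subst hsplit
  exact prefix_keeps_max_degree_general hM fun x hx => hR x (htail x hx)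
end
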